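/- Let (A, t) be a C_k-algebra with 0 ≠ 1. Then the following are equivalent: (i) (A, t) is simple, i.e., the only c-filters of A are {1} and A; (ii) for every a ∈ A with a ≠ 1, ⋀_{j=1}^{k} t^j(△a) = 0; (iii) K(A) = {0, 1}, where K(A) = {x ∈ A : t(x) = x and ∇x = x}. -/

import Mathlib

universe u

/-- Modal pseudocomplemented De Morgan algebra (mpM-algebra). -/
class MpM (A : Type u) extends DistribLattice A, BoundedOrder A where
  dm : A → A   -- De Morgan negation ∼
  ps : A → A   -- pseudocomplement *
  dm_dm : ∀ x : A, dm (dm x) = x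
  dm_sup : ∀ x y : A, dm (x ⊔ y) = dm x ⊓ dm y
  pseudo : ∀ a x : A, a ⊓ x = ⊥ ↔ x ≤ ps a
  modal : ∀ x : A, x ⊔ dm x ≤ x ⊔ ps x

open MpM

variable {A : Type u} [MpM A]

/-- ∇x = ∼(∼x ∧ x*) -/
def nabla (x : A) : A := dm (dm x ⊓ ps x)

/-- △x = ∼∇∼x -/
def tri (x : A) : A := dm (nabla (dm x))

/-- A C_k-algebra structure on an mpM-algebra `A`: an automorphism `t` with `t^k = id`. -/
structure CkStr (A : Type u) [MpM A] (k : ℕ) where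
  t : A → A
  bij : Function.Bijective t
  map_inf : ∀ x y : A, t (x ⊓ y) = t x ⊓ t y
  map_sup : ∀ x y : A, t (x ⊔ y) = t x ⊔ t y
  map_dm : ∀ x : A, t (dm x) = dm (t x)
  map_ps : ∀ x : A, t (ps x) = ps (t x)
  map_bot : t (⊥ : A) = ⊥
  map_top : t (⊤ : A) = ⊤
  periodic : ∀ x : A, t^[k] x = x

/-- Lattice filter: nonempty, upward closed, closed under binary meets. -/
def IsLatFilter (F : Set A) : Prop :=
  F.Nonempty ∧ (∀ x ∈ F, ∀ y : A, x ≤ y → y ∈ F) ∧ ∀ x ∈ F, ∀ y ∈ F, x ⊓ y ∈ F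

/-- c-filter: a filter closed under △ and t. -/
def IsCFilter {k : ℕ} (T : CkStr A k) (F : Set A) : Prop :=
  IsLatFilter F ∧ ∀ x ∈ F, tri x ∈ F ∧ T.t x ∈ F

/-- maximal c-filter: proper and not properly contained in a proper c-filter. -/
def IsMaxCFilter {k : ℕ} (T : CkStr A k) (N : Set A) : Prop :=
  IsCFilter T N ∧ N ≠ Set.univ ∧
    ∀ G : Set A, IsCFilter T G → G ≠ Set.univ → N ⊆ G → N = G

/-- prime filter -/
def IsPrimeFilter (P : Set A) : Prop :=
  IsLatFilter P ∧ P ≠ Set.univ ∧ ∀ x y : A, x ⊔ y ∈ P → x ∈ P ∨ y ∈ P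

/-- ultrafilter: maximal proper (lattice) filter -/
def IsUltraFilter (U : Set A) : Prop :=
  IsLatFilter U ∧ U ≠ Set.univ ∧
    ∀ G : Set A, IsLatFilter G → G ≠ Set.univ → U ⊆ G → U = G

/-- Birula–Rasiowa transformation φ(P) = A \ {∼x : x ∈ P}. -/
def brPhi (P : Set A) : Set A := Set.univ \ (dm '' P)

/-- a ⇁ b = (⋁_{i=1}^{k} ∇(∼ t^i(a))) ∨ b -/
def rimp {k : ℕ} (T : CkStr A k) (a b : A) : A :=
  ((Finset.Icc 1 k).sup fun i => nabla (dm (T.t^[i] a))) ⊔ b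

/-- cyclic deductive system -/
def IsCDS {k : ℕ} (T : CkStr A k) (D : Set A) : Prop :=
  (⊤ : A) ∈ D ∧ ∀ x ∈ D, ∀ y : A, rimp T x y ∈ D → y ∈ D

/-- maximal cyclic deductive system -/
def IsMaxCDS {k : ℕ} (T : CkStr A k) (M : Set A) : Prop :=
  IsCDS T M ∧ M ≠ Set.univ ∧
    ∀ G : Set A, IsCDS T G → G ≠ Set.univ → M ⊆ G → M = G

/-- the smallest cyclic deductive system containing `X` -/
def genCDS {k : ℕ} (T : CkStr A k) (X : Set A) : Set A :=
  ⋂₀ {D : Set A | IsCDS T D ∧ X ⊆ D}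

/-- K(A) = {x : t(x) = x and ∇x = x} -/
def Kset {k : ℕ} (T : CkStr A k) : Set A := {x : A | T.t x = x ∧ nabla x = x}

/-- consistency operator ∘x = ⋀_{i=0}^{k} t^i((∼x ∨ x) ∧ (x ∧ ∼x)*) -/
def cCirc {k : ℕ} (T : CkStr A k) (x : A) : A :=
  (Finset.Icc 0 k).inf fun i => T.t^[i] ((dm x ⊔ x) ⊓ ps (x ⊓ dm x))

/-- x → y = ∼((∼(x∨y))* ∧ (x∨y)) ∨ ((∼(x∧y))* ∧ (x∧y)) -/
def mpTo (x y : A) : A :=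
  dm (ps (dm (x ⊔ y)) ⊓ (x ⊔ y)) ⊔ (ps (dm (x ⊓ y)) ⊓ (x ⊓ y))

/-- x ⇒ y = (x → y) ∧ (∼y → ∼x) -/
def mpIff (x y : A) : A := mpTo x y ⊓ mpTo (dm y) (dm x)

theorem h14_dm_inf (x y : A) : dm (x ⊓ y) = dm x ⊔ dm y := by
  have h := dm_sup (dm x) (dm y)
  rw [dm_dm, dm_dm] at h
  rw [← h, dm_dm]

theorem h14_anti {x y : A} (h : x ≤ y) : dm y ≤ dm x := by
  have h2 := dm_sup x y
  rw [sup_eq_right.2 h] at h2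
  rw [h2]; exact inf_le_left

theorem h14_dm_top : dm (⊤ : A) = ⊥ := by
  apply le_bot_iff.1
  have h := h14_anti (le_top : dm (⊥ : A) ≤ ⊤)
  rwa [dm_dm] at h

theorem h14_dm_bot : dm (⊥ : A) = ⊤ := by rw [← h14_dm_top, dm_dm]

theorem h14_inf_ps (x : A) : x ⊓ ps x = ⊥ := (pseudo x (ps x)).2 le_rfl

theorem h14_tri (x : A) : tri x = x ⊓ ps (dm x) := by
  unfold tri nabla
  rw [dm_dm, dm_dm]

theorem h14_nabla (x : A) : nabla x = x ⊔ dm (ps x) := by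
  unfold nabla
  rw [h14_dm_inf, dm_dm]

theorem h14_tri_le (x : A) : tri x ≤ x := by
  rw [h14_tri]; exact inf_le_left

theorem h14_ps_anti {x y : A} (h : x ≤ y) : ps y ≤ ps x := by
  rw [← pseudo]
  exact le_bot_iff.1 ((inf_le_inf_right _ h).trans (h14_inf_ps y).le)

theorem h14_tri_mono {x y : A} (h : x ≤ y) : tri x ≤ tri y := by
  rw [h14_tri, h14_tri]
  exact inf_le_inf h (h14_ps_anti (h14_anti h))

/-- `∇x = x` iff `x ∧ ∼x = 0`. -/
theorem h14_nabla_iff (x : A) : nabla x = x ↔ x ⊓ dm x = ⊥ := by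
  rw [h14_nabla, sup_eq_left, pseudo]
  constructor
  · intro h
    have := h14_anti h
    rwa [dm_dm] at this
  · intro h
    have := h14_anti h
    rwa [dm_dm] at this

theorem h14_tri_of_sharp {x : A} (h : x ⊓ dm x = ⊥) : tri x = x := by
  rw [h14_tri, inf_eq_left, ← pseudo, inf_comm]
  exact h

theorem h14_tri_sharp (x : A) : tri x ⊓ dm (tri x) = ⊥ := by
  have hm : dm (dm x ⊔ ps (dm x)) ≤ dm x := by
    have h := (le_sup_right.trans (modal (dm x)))
    have := h14_anti h
    rwa [dm_dm] at this
  rw [dm_sup, dm_dm] at hm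
  rw [h14_tri, h14_dm_inf, inf_sup_left]
  apply le_bot_iff.1
  rw [← h14_inf_ps (dm x)]
  apply sup_le
  · exact le_inf inf_le_right (inf_le_left.trans inf_le_right)
  · exact le_inf ((le_inf (inf_le_left.trans inf_le_left) inf_le_right).trans hm)
      (inf_le_left.trans inf_le_right)

theorem h14_inf_sharp {x y : A} (hx : x ⊓ dm x = ⊥) (hy : y ⊓ dm y = ⊥) :
    (x ⊓ y) ⊓ dm (x ⊓ y) = ⊥ := by
  rw [h14_dm_inf, inf_sup_left]
  apply le_bot_iff.1
  apply sup_le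
  · rw [← hx]; exact inf_le_inf_right _ inf_le_left
  · rw [← hy]; exact inf_le_inf_right _ inf_le_right

theorem h14_iter_sharp {k : ℕ} (T : CkStr A k) {x : A} (hx : x ⊓ dm x = ⊥) (j : ℕ) :
    T.t^[j] x ⊓ dm (T.t^[j] x) = ⊥ := by
  induction j with
  | zero => exact hx
  | succ n ih =>
    rw [Function.iterate_succ_apply', ← T.map_dm, ← T.map_inf, ih, T.map_bot]

theorem h14_fixed {k : ℕ} (hk : 0 < k) (T : CkStr A k) (d : A) :
    T.t ((Finset.Icc 1 k).inf fun j => T.t^[j] d) = (Finset.Icc 1 k).inf fun j => T.t^[j] d := by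
  rw [Finset.comp_inf_eq_inf_comp T.t T.map_inf T.map_top]
  apply le_antisymm
  · refine Finset.le_inf fun j hj => ?_
    rw [Finset.mem_Icc] at hj
    by_cases h1 : j = 1
    · subst h1
      refine (Finset.inf_le (Finset.mem_Icc.2 ⟨hk, le_rfl⟩)).trans ?_
      simp [T.periodic]
    · refine (Finset.inf_le (b := j - 1) (Finset.mem_Icc.2 ⟨by omega, by omega⟩)).trans ?_
      simp only [Function.comp_apply]
      rw [← Function.iterate_succ_apply' T.t, Nat.succ_eq_add_one, Nat.sub_add_cancel hj.1]
  · refine Finset.le_inf fun j hj => ?_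
    rw [Finset.mem_Icc] at hj
    by_cases h1 : j = k
    · subst h1
      refine (Finset.inf_le (b := 1) (Finset.mem_Icc.2 ⟨le_rfl, hk⟩)).trans ?_
      simp [T.periodic]
    · refine (Finset.inf_le (b := j + 1) (Finset.mem_Icc.2 ⟨by omega, by omega⟩)).trans ?_
      simp only [Function.comp_apply]
      rw [Function.iterate_succ_apply' T.t]

theorem h14_t_mono {k : ℕ} (T : CkStr A k) {x y : A} (h : x ≤ y) : T.t x ≤ T.t y := by
  rw [← inf_eq_left, ← T.map_inf, inf_eq_left.2 h]

theorem stmt14 {k : ℕ} (hk : 0 < k) (T : CkStr A k) (hnt : (⊥ : A) ≠ ⊤) :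
    List.TFAE
      [ ∀ F : Set A, IsCFilter T F → F = {(⊤ : A)} ∨ F = Set.univ,
        ∀ a : A, a ≠ ⊤ → ((Finset.Icc 1 k).inf fun j => T.t^[j] (tri a)) = ⊥,
        Kset T = {(⊥ : A), ⊤} ] := by
  tfae_have 1 → 3 := by
    intro h
    ext b
    simp only [Kset, Set.mem_setOf_eq, Set.mem_insert_iff, Set.mem_singleton_iff]
    rw [h14_nabla_iff]
    constructor
    · rintro ⟨ht, hb⟩
      have hF : IsCFilter T (Set.Ici b) := by
        refine ⟨⟨⟨b, le_rfl⟩, fun x hx y hxy => le_trans hx hxy, fun x hx y hy => le_inf hx hy⟩,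
          fun x hx => ⟨?_, ?_⟩⟩
        · have := h14_tri_mono (Set.mem_Ici.1 hx)
          rwa [h14_tri_of_sharp hb] at this
        · have := h14_t_mono T (Set.mem_Ici.1 hx)
          rwa [ht] at this
      rcases h _ hF with h1 | h1
      · right
        have : b ∈ Set.Ici b := le_rfl
        rw [h1] at this
        exact this
      · left
        have : (⊥ : A) ∈ Set.Ici b := by rw [h1]; trivial
        exact le_bot_iff.1 this
    · rintro (rfl | rfl)
      · exact ⟨T.map_bot, bot_inf_eq _⟩
      · exact ⟨T.map_top, by rw [h14_dm_top, inf_bot_eq]⟩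
  tfae_have 3 → 2 := by
    intro h a ha
    have hmem : ((Finset.Icc 1 k).inf fun j => T.t^[j] (tri a)) ∈ Kset T := by
      refine ⟨h14_fixed hk T _, ?_⟩
      rw [h14_nabla_iff]
      refine Finset.inf_induction (p := fun x : A => x ⊓ dm x = ⊥) ?_ ?_ ?_
      · rw [h14_dm_top, inf_bot_eq]
      · intro x hx y hy
        exact h14_inf_sharp hx hy
      · intro j _
        exact h14_iter_sharp T (h14_tri_sharp a) j
    rw [h] at hmem
    rcases hmem with h1 | h1
    · exact h1
    · exfalso
      apply ha
      rw [Set.mem_singleton_iff] at h1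
      rw [← top_le_iff, ← h1]
      refine (Finset.inf_le (Finset.mem_Icc.2 ⟨hk, le_rfl⟩)).trans ?_
      rw [T.periodic]
      exact h14_tri_le a
  tfae_have 2 → 1 := by
    intro h F hF
    obtain ⟨⟨⟨x0, hx0⟩, hup, hinf⟩, hc⟩ := hF
    have htop : (⊤ : A) ∈ F := hup x0 hx0 _ le_top
    by_cases hex : ∃ a ∈ F, a ≠ ⊤
    · right
      obtain ⟨a, haF, ha⟩ := hex
      have hit : ∀ j : ℕ, T.t^[j] (tri a) ∈ F := by
        intro j
        induction j with
        | zero => exact (hc a haF).1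
        | succ n ih =>
          rw [Function.iterate_succ_apply']
          exact (hc _ ih).2
      have hb : ((Finset.Icc 1 k).inf fun j => T.t^[j] (tri a)) ∈ F :=
        Finset.inf_induction (p := fun x : A => x ∈ F) htop hinf (fun j _ => hit j)
      rw [h a ha] at hb
      exact Set.eq_univ_of_forall fun x => hup _ hb x bot_le
    · left
      push Not at hex
      exact Set.eq_singleton_iff_unique_mem.2 ⟨htop, hex⟩
  tfae_finish
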